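/- arXiv:2503.09014 — 5 statements merged into one kernel-verified Lean document; each statement's English description precedes it below -/
import Mathlib

section
/- The function H(x,y) = (x²+y²)/(1+2xy) is a first integral of the cubic system S₂*: for every (x,y) ∈ ℝ² with 1+2xy ≠ 0, the directional derivative of H along the vector field vanishes, i.e. (∂H/∂x)(x,y)·(−y+x³−xy²) + (∂H/∂y)(x,y)·(x+x²y−y³) = 0. -/
/-! Write `X = (P, Q)`. By the quotient rule, `∂H/∂x = 2 Q / (1 + 2xy)²` and
`∂H/∂y = -2 P / (1 + 2xy)²`. Hence the Hamiltonian vector field `(∂H/∂y, -∂H/∂x)` is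
`-2 / (1 + 2xy)²` times `X`, and the two terms of the directional derivative cancel. -/

/-- The function `H(x,y) = (x²+y²)/(1+2xy)` is a first integral of the cubic
isochronous system `S₂* : (ẋ,ẏ) = (−y+x³−xy², x+x²y−y³)`: at every point where
`1+2xy ≠ 0`, the directional derivative of `H` along the vector field vanishes. -/
theorem first_integral_S2star (x y : ℝ) (hxy : 1 + 2 * x * y ≠ 0) :
    deriv (fun x' : ℝ => (x' ^ 2 + y ^ 2) / (1 + 2 * x' * y)) x *
        (-y + x ^ 3 - x * y ^ 2) +
      deriv (fun y' : ℝ => (x ^ 2 + y' ^ 2) / (1 + 2 * x * y')) y *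
        (x + x ^ 2 * y - y ^ 3) = 0 := by
  have hX : HasDerivAt (fun x' : ℝ => (x' ^ 2 + y ^ 2) / (1 + 2 * x' * y))
      (2 * (x + x ^ 2 * y - y ^ 3) / (1 + 2 * x * y) ^ 2) x := by
    have hnum : HasDerivAt (fun x' : ℝ => x' ^ 2 + y ^ 2) (2 * x) x := by
      simpa using (hasDerivAt_pow 2 x).add_const (y ^ 2)
    have hden : HasDerivAt (fun x' : ℝ => 1 + 2 * x' * y) (2 * y) x := by
      simpa using (((hasDerivAt_id x).const_mul 2).mul_const y).const_add 1
    exact (hnum.fun_div hden hxy).congr_deriv (by ring)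
  have hY : HasDerivAt (fun y' : ℝ => (x ^ 2 + y' ^ 2) / (1 + 2 * x * y'))
      (-2 * (-y + x ^ 3 - x * y ^ 2) / (1 + 2 * x * y) ^ 2) y := by
    have hnum : HasDerivAt (fun y' : ℝ => x ^ 2 + y' ^ 2) (2 * y) y := by
      simpa using (hasDerivAt_pow 2 y).const_add (x ^ 2)
    have hden : HasDerivAt (fun y' : ℝ => 1 + 2 * x * y') (2 * x) y := by
      simpa using ((hasDerivAt_id y).const_mul (2 * x)).const_add 1
    exact (hnum.fun_div hden hxy).congr_deriv (by ring)
  rw [hX.deriv, hY.deriv]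
  ring
end

section
/- The function μ(x,y) = 2(1+2xy)^{−2} is an integrating factor of the cubic system S₂*: for every (x,y) ∈ ℝ² with 1+2xy ≠ 0, the divergence of the rescaled vector field vanishes, i.e. ∂/∂x [μ(x,y)·(−y+x³−xy²)] + ∂/∂y [μ(x,y)·(x+x²y−y³)] = 0. -/
/-!
Write `P = −y+x³−xy²`, `Q = x+x²y−y³` and `D = 1+2xy`. The curve `D = 0` is invariant with
cofactor half the divergence of the field:
`P ∂ₓD + Q ∂ᵧD = 2(x²−y²) D`, while `∂ₓP + ∂ᵧQ = 4(x²−y²)`.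
Hence `div (2D⁻²(P,Q)) = 2D⁻² (4(x²−y²) − 2·2(x²−y²)) = 0`. After the two partial derivatives are
computed by the quotient rule, this is an identity of rational functions.
-/

/-- The function `μ(x,y) = 2(1+2xy)⁻²` is an integrating factor of the cubic
isochronous system `S₂* : (ẋ,ẏ) = (−y+x³−xy², x+x²y−y³)`: at every point where
`1+2xy ≠ 0`, the divergence of the rescaled vector field `(μP, μQ)` vanishes. -/
theorem integrating_factor_S2star (x y : ℝ) (hxy : 1 + 2 * x * y ≠ 0) :
    deriv (fun x' : ℝ => 2 / (1 + 2 * x' * y) ^ 2 * (-y + x' ^ 3 - x' * y ^ 2)) x +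
      deriv (fun y' : ℝ => 2 / (1 + 2 * x * y') ^ 2 * (x + x ^ 2 * y' - y' ^ 3)) y = 0 := by
  have hD₁ : HasDerivAt (fun x' : ℝ => 1 + 2 * x' * y) (2 * 1 * y) x :=
    (((hasDerivAt_id' x).const_mul 2).mul_const y).const_add 1
  have hD₂ : HasDerivAt (fun y' : ℝ => 1 + 2 * x * y') (2 * x * 1) y :=
    ((hasDerivAt_id' y).const_mul (2 * x)).const_add 1
  have hP := (((hasDerivAt_id' x).fun_pow 3).const_add (-y)).fun_sub
    ((hasDerivAt_id' x).mul_const (y ^ 2))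
  have hQ := (((hasDerivAt_id' y).const_mul (x ^ 2)).const_add x).fun_sub
    ((hasDerivAt_id' y).fun_pow 3)
  have h₁ := (((hasDerivAt_const x (2 : ℝ)).fun_div (hD₁.fun_pow 2) (pow_ne_zero 2 hxy)).fun_mul hP)
  have h₂ := (((hasDerivAt_const y (2 : ℝ)).fun_div (hD₂.fun_pow 2) (pow_ne_zero 2 hxy)).fun_mul hQ)
  rw [h₁.deriv, h₂.deriv]
  field_simp
  ring
end

section
/- For every integer k ≥ 1 there exists a real polynomial P of degree exactly ⌊(k−1)/2⌋ such that for all h ∈ (0,1), ∫₀^{2π} (1 − h·sin θ)^{−k} dθ = P(h²) · (1 − h²)^{1/2 − k}. -/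
/-!
Write `u = 1 - h sin θ` and `s = √(1 - h²)`. Integrating the derivative of the periodic function
`h cos θ · u⁻ᵏ` over a period, and using `h² cos² θ = -s² + 2u - u²`, gives
`k s² L_{k+1} = (2k - 1) L_k - (k - 1) L_{k-1}`.
Together with `L_1 = 2π / s` (`integral_inv_one_sub`, from an explicit antiderivative) this shows
`L_k = Q_k(h²) s^{1 - 2k}`, where `Q_1 = Q_2 = 2π` and
`k Q_{k+1} = (2k - 1) Q_k - (k - 1)(1 - X) Q_{k-1}`.
The degree follows from the recurrence by tracking the coefficient of index `⌊(k-1)/2⌋`: since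
`-(1 - X)` has leading coefficient `1`, every contribution to it is nonnegative and at least one
is positive.
-/

open Real

lemma one_sub_pos {h : ℝ} (hh : h ∈ Set.Ioo (0 : ℝ) 1) (θ : ℝ) : 0 < 1 - h * Real.sin θ := by
  nlinarith [hh.1, hh.2, Real.sin_le_one θ]

lemma inv_pow_intervalIntegrable {h : ℝ} (hh : h ∈ Set.Ioo (0 : ℝ) 1) (k : ℕ) (a b : ℝ) :
    IntervalIntegrable (fun θ => ((1 - h * Real.sin θ) ^ k)⁻¹) MeasureTheory.volume a b := by
  apply Continuous.intervalIntegrable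
  exact Continuous.inv₀ (by fun_prop) fun θ => (pow_pos (one_sub_pos hh θ) k).ne'

/-- With `s = √(1 - h²)`, the function `(θ - 2 arctan (h cos θ / (1 + s - h sin θ))) / s` is an
antiderivative of `1 / (1 - h sin θ)` on the whole line, which the usual half-angle one is not. -/
lemma integral_inv_one_sub {h : ℝ} (hh : h ∈ Set.Ioo (0 : ℝ) 1) :
    ∫ θ in (0 : ℝ)..(2 * π), ((1 - h * Real.sin θ) ^ 1)⁻¹ = 2 * π / √(1 - h ^ 2) := by
  have hw : 0 < 1 - h ^ 2 := by nlinarith [hh.1, hh.2]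
  set s := √(1 - h ^ 2) with hs
  have hs0 : 0 < s := Real.sqrt_pos.2 hw
  have hs2 : s ^ 2 = 1 - h ^ 2 := Real.sq_sqrt hw.le
  have key : ∀ θ ∈ Set.uIcc 0 (2 * π), HasDerivAt
      (fun θ => (θ - 2 * Real.arctan (h * Real.cos θ / (1 + s - h * Real.sin θ))) / s)
      ((1 - h * Real.sin θ) ^ 1)⁻¹ θ := by
    intro θ _
    have hu := one_sub_pos hh θ
    have hd : 0 < 1 + s - h * Real.sin θ := by linarith
    have h1 := (((Real.hasDerivAt_cos θ).const_mul h).div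
      (((Real.hasDerivAt_sin θ).const_mul h).const_sub (1 + s)) hd.ne').arctan
    have h2 := ((hasDerivAt_id θ).sub (h1.const_mul 2)).div_const s
    have hc := Real.sin_sq_add_cos_sq θ
    have e1 : (1 + s - h * Real.sin θ) ^ 2 + (h * Real.cos θ) ^ 2
        = 2 * (1 + s) * (1 - h * Real.sin θ) := by
      linear_combination h ^ 2 * hc + hs2
    have e2 : h * -Real.sin θ * (1 + s - h * Real.sin θ) - h * Real.cos θ * -(h * Real.cos θ)
        = (1 + s) * (1 - s - h * Real.sin θ) := by
      linear_combination h ^ 2 * hc + hs2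
    have e3 : 1 + (h * Real.cos θ / (1 + s - h * Real.sin θ)) ^ 2
        = 2 * (1 + s) * (1 - h * Real.sin θ) / (1 + s - h * Real.sin θ) ^ 2 := by
      rw [← e1]; field_simp
    refine h2.congr_deriv ?_
    simp only [Pi.div_apply]
    rw [e2, e3]
    have : 0 < 1 + s := by linarith
    field_simp
    ring
  rw [intervalIntegral.integral_eq_sub_of_hasDerivAt key (inv_pow_intervalIntegrable hh 1 _ _)]
  simp
  ring

/-- The recurrence `(n + 1) s² L_{n+2} = (2n + 1) L_{n+1} - n L_n`. -/
lemma integral_recurrence {h : ℝ} (hh : h ∈ Set.Ioo (0 : ℝ) 1) (n : ℕ) :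
    (n + 1) * (1 - h ^ 2) * ∫ θ in (0 : ℝ)..(2 * π), ((1 - h * Real.sin θ) ^ (n + 2))⁻¹ =
      (2 * n + 1) * (∫ θ in (0 : ℝ)..(2 * π), ((1 - h * Real.sin θ) ^ (n + 1))⁻¹) -
        n * ∫ θ in (0 : ℝ)..(2 * π), ((1 - h * Real.sin θ) ^ n)⁻¹ := by
  have I := fun k => inv_pow_intervalIntegrable hh k 0 (2 * π)
  have key : ∀ θ ∈ Set.uIcc 0 (2 * π), HasDerivAt
      (fun θ => h * Real.cos θ * ((1 - h * Real.sin θ) ^ (n + 1))⁻¹)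
      ((2 * n + 1) * ((1 - h * Real.sin θ) ^ (n + 1))⁻¹ - n * ((1 - h * Real.sin θ) ^ n)⁻¹
        - (n + 1) * (1 - h ^ 2) * ((1 - h * Real.sin θ) ^ (n + 2))⁻¹) θ := by
    intro θ _
    have hu := one_sub_pos hh θ
    have h1 := ((Real.hasDerivAt_cos θ).const_mul h).mul
      (((((Real.hasDerivAt_sin θ).const_mul h).const_sub 1).pow (n + 1)).inv
        (pow_pos hu (n + 1)).ne')
    refine h1.congr_deriv ?_
    have hc := Real.sin_sq_add_cos_sq θ
    simp only [Pi.pow_apply, Pi.inv_apply, Nat.add_sub_cancel]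
    have a1 : ((1 - h * Real.sin θ) ^ (n + 1))⁻¹
        = (1 - h * Real.sin θ) * ((1 - h * Real.sin θ) ^ (n + 2))⁻¹ := by
      field_simp
      ring
    have a0 : ((1 - h * Real.sin θ) ^ n)⁻¹
        = (1 - h * Real.sin θ) ^ 2 * ((1 - h * Real.sin θ) ^ (n + 2))⁻¹ := by
      field_simp
      ring
    have a2 : -(((n + 1 : ℕ) : ℝ) * (1 - h * Real.sin θ) ^ n * -(h * Real.cos θ))
          / ((1 - h * Real.sin θ) ^ (n + 1)) ^ 2
        = (n + 1) * (h * Real.cos θ) * ((1 - h * Real.sin θ) ^ (n + 2))⁻¹ := by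
      push_cast
      field_simp
      ring
    rw [a2, a1, a0]
    linear_combination (n + 1) * h ^ 2 * ((1 - h * Real.sin θ) ^ (n + 2))⁻¹ * hc
  have := intervalIntegral.integral_eq_sub_of_hasDerivAt key
    ((((I _).const_mul _).sub ((I _).const_mul _)).sub ((I _).const_mul _))
  rw [intervalIntegral.integral_sub (((I _).const_mul _).sub ((I _).const_mul _))
    ((I _).const_mul _), intervalIntegral.integral_sub ((I _).const_mul _) ((I _).const_mul _),
    intervalIntegral.integral_const_mul, intervalIntegral.integral_const_mul,
    intervalIntegral.integral_const_mul] at this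
  simp at this
  linarith

/-- The structure theorem for `k = n + 1`. The degree is recorded as a bound plus positivity of
the top coefficient, the form that propagates through the recurrence. -/
lemma exists_poly (n : ℕ) : ∃ P : Polynomial ℝ, (∀ j, n / 2 < j → P.coeff j = 0) ∧
    0 < P.coeff (n / 2) ∧ ∀ h ∈ Set.Ioo (0 : ℝ) 1,
      ∫ θ in (0 : ℝ)..(2 * π), ((1 - h * Real.sin θ) ^ (n + 1))⁻¹ =
        P.eval (h ^ 2) * (1 - h ^ 2) ^ ((1 / 2 : ℝ) - (n + 1 : ℕ)) := by
  have hw : ∀ h ∈ Set.Ioo (0 : ℝ) 1, 0 < 1 - h ^ 2 := fun h hh => by nlinarith [hh.1, hh.2]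
  have base : ∀ h ∈ Set.Ioo (0 : ℝ) 1, ∫ θ in (0 : ℝ)..(2 * π), ((1 - h * Real.sin θ) ^ 1)⁻¹ =
      2 * π * (1 - h ^ 2) ^ (-(1 / 2) : ℝ) := fun h hh => by
    rw [integral_inv_one_sub hh, Real.rpow_neg (hw h hh).le, ← Real.sqrt_eq_rpow, div_eq_mul_inv]
  have hC : ∀ j, 0 < j → (Polynomial.C (2 * π)).coeff j = 0 := fun j hj => by
    rw [Polynomial.coeff_C, if_neg hj.ne']
  induction n using Nat.twoStepInduction with
  | zero =>
    refine ⟨Polynomial.C (2 * π), by simpa using hC, by simp [Real.pi_pos], fun h hh => ?_⟩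
    rw [zero_add, base h hh, Polynomial.eval_C]
    norm_num
  | one =>
    refine ⟨Polynomial.C (2 * π), by simpa using hC, by simp [Real.pi_pos], fun h hh => ?_⟩
    have hr := integral_recurrence hh 0
    simp only [Nat.cast_zero, zero_add, mul_zero, one_mul, zero_mul, sub_zero] at hr
    rw [base h hh] at hr
    have e : (1 - h ^ 2) ^ (-(1 / 2) : ℝ)
        = (1 - h ^ 2) ^ ((1 / 2 : ℝ) - (1 + 1 : ℕ)) * (1 - h ^ 2) := by
      rw [← Real.rpow_add_one (hw h hh).ne']; norm_num
    rw [e] at hr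
    apply mul_left_cancel₀ (hw h hh).ne'
    rw [Polynomial.eval_C, hr]
    ring
  | more m ih0 ih1 =>
    obtain ⟨P, hP, hP0, hPI⟩ := ih0
    obtain ⟨Q, hQ, hQ0, hQI⟩ := ih1
    have hm : (0 : ℝ) < m + 2 := by positivity
    refine ⟨Polynomial.C ((m + 2 : ℝ)⁻¹) * (Polynomial.C (2 * m + 3 : ℝ) * Q
      - Polynomial.C (m + 1 : ℝ) * (P - P * Polynomial.X)), ?_, ?_, fun h hh => ?_⟩
    · intro j hj
      obtain ⟨i, rfl⟩ : ∃ i, j = i + 1 := ⟨j - 1, by omega⟩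
      simp only [Polynomial.coeff_C_mul, Polynomial.coeff_sub, Polynomial.coeff_mul_X]
      rw [hQ _ (by omega), hP _ (by omega), hP _ (by omega)]
      simp
    · rw [show (m + 2) / 2 = m / 2 + 1 by omega]
      simp only [Polynomial.coeff_C_mul, Polynomial.coeff_sub, Polynomial.coeff_mul_X]
      rw [hP (m / 2 + 1) (by omega)]
      -- The index `m / 2 + 1` is the top one for `Q` if `m` is odd and lies beyond it otherwise.
      have hQ' : 0 ≤ Q.coeff (m / 2 + 1) := by
        rcases Nat.lt_or_ge ((m + 1) / 2) (m / 2 + 1) with hlt | hge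
        · exact (hQ _ hlt).ge
        · rw [show m / 2 + 1 = (m + 1) / 2 by omega]; exact hQ0.le
      have hA : 0 ≤ (2 * m + 3 : ℝ) * Q.coeff (m / 2 + 1) := by positivity
      have hB : 0 < (m + 1 : ℝ) * P.coeff (m / 2) := by positivity
      apply mul_pos (inv_pos.2 hm)
      linarith
    · have hr := integral_recurrence hh (m + 1)
      rw [hPI h hh, hQI h hh] at hr
      have e1 : (1 - h ^ 2) ^ ((1 / 2 : ℝ) - (m + 1 + 1 : ℕ))
          = (1 - h ^ 2) ^ ((1 / 2 : ℝ) - (m + 2 + 1 : ℕ)) * (1 - h ^ 2) := by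
        rw [← Real.rpow_add_one (hw h hh).ne']; congr 1; push_cast; ring
      have e0 : (1 - h ^ 2) ^ ((1 / 2 : ℝ) - (m + 1 : ℕ))
          = (1 - h ^ 2) ^ ((1 / 2 : ℝ) - (m + 1 + 1 : ℕ)) * (1 - h ^ 2) := by
        rw [← Real.rpow_add_one (hw h hh).ne']; congr 1; push_cast; ring
      rw [e0, e1] at hr
      simp only [Polynomial.eval_mul, Polynomial.eval_sub, Polynomial.eval_C, Polynomial.eval_X]
      apply mul_left_cancel₀ (mul_pos hm (hw h hh)).ne'
      rw [show m + 1 + 2 = m + 2 + 1 by ring] at hr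
      generalize (1 - h ^ 2) ^ ((1 / 2 : ℝ) - (m + 2 + 1 : ℕ)) = A at hr ⊢
      push_cast at hr
      have hi : (m + 2 : ℝ) * (m + 2 : ℝ)⁻¹ = 1 := mul_inv_cancel₀ hm.ne'
      linear_combination hr - (1 - h ^ 2) * A * ((2 * m + 3) * Q.eval (h ^ 2)
        - (m + 1) * (P.eval (h ^ 2) - P.eval (h ^ 2) * h ^ 2)) * hi

/-- For every integer `k ≥ 1` there is a real polynomial `P` of degree exactly
`⌊(k−1)/2⌋` such that `L_k(h) = ∫₀^{2π} (1 − h sin θ)^{-k} dθ = P(h²)(1 − h²)^{1/2 − k}`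
for all `h ∈ (0,1)`. -/
theorem L_pos_structure (k : ℕ) (hk : 1 ≤ k) :
    ∃ P : Polynomial ℝ, P.degree = ((k - 1) / 2 : ℕ) ∧
      ∀ h ∈ Set.Ioo (0 : ℝ) 1,
        ∫ θ in (0 : ℝ)..(2 * π), ((1 - h * Real.sin θ) ^ k)⁻¹ =
          P.eval (h ^ 2) * (1 - h ^ 2) ^ ((1 / 2 : ℝ) - k) := by
  obtain ⟨n, rfl⟩ : ∃ n, k = n + 1 := ⟨k - 1, by omega⟩
  obtain ⟨P, hP, hP0, hPI⟩ := exists_poly n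
  refine ⟨P, ?_, hPI⟩
  rw [Nat.add_sub_cancel]
  refine le_antisymm ?_ (Polynomial.le_degree_of_ne_zero hP0.ne')
  rw [Polynomial.degree_le_iff_coeff_zero]
  exact fun j hj => hP j (by exact_mod_cast hj)
end

section
/- The function A₀(h) = ∫_{−π}^{π} ln(1 − h·sin θ) dθ is differentiable on (0,1) with derivative A₀′(h) = 2π/h − 2π/(h·√(1 − h²)) for every h ∈ (0,1). -/
/-!
Differentiating under the integral sign gives `A₀'(h) = ∫ -sin θ / (1 - h sin θ)`, and the integrand
is `(1 - 1 / (1 - h sin θ)) / h`, so the theorem reduces to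
`∫_{-π}^{π} 1 / (1 - h sin θ) = 2π / √(1 - h²)`. The Weierstrass substitution would produce an
antiderivative with a jump; instead, with `s = √(1 - h²)`, the integrated Poisson kernel
`θ - 2 arctan (h cos θ / (1 + s - h sin θ))` is a smooth antiderivative of `s / (1 - h sin θ)` on the
whole line. Its arctangent term is `2π`-periodic, so only the `θ` term contributes to the integral.
-/

open Real

lemma one_sub_mul_sin_ge {x : ℝ} (hx : 0 ≤ x) (θ : ℝ) : 1 - x ≤ 1 - x * Real.sin θ := by
  nlinarith [Real.sin_le_one θ]

/-- The integrated Poisson kernel is a global antiderivative of `s / (1 - h sin θ)`, where `s`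
stands for `√(1 - h²)`. -/
lemma hasDerivAt_poissonPrimitive {h s : ℝ} (h0 : 0 < h) (h1 : h < 1) (hs : 0 < s)
    (hsq : s ^ 2 = 1 - h ^ 2) (θ : ℝ) :
    HasDerivAt (fun t => t - 2 * Real.arctan (h * Real.cos t / (1 + s - h * Real.sin t)))
      (s * (1 - h * Real.sin θ)⁻¹) θ := by
  have hE : 0 < 1 - h * Real.sin θ := by linarith [one_sub_mul_sin_ge h0.le θ]
  have hD : 0 < 1 + s - h * Real.sin θ := by linarith
  have hnum : HasDerivAt (fun t => h * Real.cos t) (h * -Real.sin θ) θ :=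
    (Real.hasDerivAt_cos θ).const_mul h
  have hden : HasDerivAt (fun t => 1 + s - h * Real.sin t) (-(h * Real.cos θ)) θ :=
    ((Real.hasDerivAt_sin θ).const_mul h).const_sub (1 + s)
  have key := (hasDerivAt_id θ).sub (((hnum.div hden hD.ne').arctan).const_mul 2)
  refine key.congr_deriv ?_
  have hsum : (1 + s - h * Real.sin θ) ^ 2 + (h * Real.cos θ) ^ 2
      = 2 * (1 + s) * (1 - h * Real.sin θ) := by
    linear_combination hsq + h ^ 2 * Real.sin_sq_add_cos_sq θ
  have hone : 1 + (h * Real.cos θ / (1 + s - h * Real.sin θ)) ^ 2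
      = 2 * (1 + s) * (1 - h * Real.sin θ) / (1 + s - h * Real.sin θ) ^ 2 := by
    rw [← hsum]; field_simp
  simp only [Pi.div_apply]
  rw [hone]
  have hS : 0 < 1 + s := by linarith
  field_simp
  linear_combination -hsq - h ^ 2 * Real.sin_sq_add_cos_sq θ

lemma continuous_inv_one_sub_mul_sin {h : ℝ} (h0 : 0 < h) (h1 : h < 1) :
    Continuous fun θ => (1 - h * Real.sin θ)⁻¹ := by
  refine Continuous.inv₀ (by fun_prop) fun θ => ?_
  linarith [one_sub_mul_sin_ge h0.le θ]

lemma integral_inv_one_sub_mul_sin {h : ℝ} (h0 : 0 < h) (h1 : h < 1) :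
    ∫ θ in (-π)..π, (1 - h * Real.sin θ)⁻¹ = 2 * π / Real.sqrt (1 - h ^ 2) := by
  have hpos : 0 < 1 - h ^ 2 := by nlinarith
  have hs : 0 < Real.sqrt (1 - h ^ 2) := Real.sqrt_pos.2 hpos
  have hftc := intervalIntegral.integral_eq_sub_of_hasDerivAt (a := -π) (b := π)
    (fun θ _ => hasDerivAt_poissonPrimitive h0 h1 hs (Real.sq_sqrt hpos.le) θ)
    ((continuous_const.mul (continuous_inv_one_sub_mul_sin h0 h1)).intervalIntegrable _ _)
  rw [intervalIntegral.integral_const_mul] at hftc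
  simp only [Real.cos_neg, Real.sin_neg, Real.sin_pi, neg_zero] at hftc
  rw [eq_div_iff hs.ne']
  linarith

lemma integral_neg_sin_div {h : ℝ} (h0 : 0 < h) (h1 : h < 1) :
    ∫ θ in (-π)..π, -Real.sin θ / (1 - h * Real.sin θ)
      = 2 * π / h - 2 * π / (h * Real.sqrt (1 - h ^ 2)) := by
  have hcongr : ∀ θ, -Real.sin θ / (1 - h * Real.sin θ)
      = h⁻¹ * (1 - (1 - h * Real.sin θ)⁻¹) := fun θ => by
    have hE : 1 - h * Real.sin θ ≠ 0 := by linarith [one_sub_mul_sin_ge h0.le θ]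
    rw [eq_inv_mul_iff_mul_eq₀ h0.ne', div_eq_mul_inv]
    linear_combination mul_inv_cancel₀ hE
  simp_rw [hcongr]
  rw [intervalIntegral.integral_const_mul, intervalIntegral.integral_sub
    intervalIntegrable_const ((continuous_inv_one_sub_mul_sin h0 h1).intervalIntegrable _ _),
    integral_inv_one_sub_mul_sin h0 h1, intervalIntegral.integral_const, smul_eq_mul]
  have hs : Real.sqrt (1 - h ^ 2) ≠ 0 := (Real.sqrt_pos.2 (by nlinarith)).ne'
  field_simp
  ring

/-- The function `A₀(h) = ∫_{−π}^{π} ln(1 − h sin θ) dθ` is differentiable on `(0,1)`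
with derivative `A₀′(h) = 2π/h − 2π/(h√(1 − h²))`. -/
theorem A0_deriv :
    ∀ h ∈ Set.Ioo (0 : ℝ) 1,
      HasDerivAt (fun h' : ℝ => ∫ θ in (-π)..π, Real.log (1 - h' * Real.sin θ))
        (2 * π / h - 2 * π / (h * Real.sqrt (1 - h ^ 2))) h := by
  rintro h ⟨h0, h1⟩
  rw [← integral_neg_sin_div h0 h1]
  have hlog : Continuous fun θ => Real.log (1 - h * Real.sin θ) := by
    refine Continuous.log (by fun_prop) fun θ => ?_
    linarith [one_sub_mul_sin_ge h0.le θ]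
  -- On `(0, (1 + h) / 2)` the denominator stays above `1 - (1 + h) / 2 = (1 - h) / 2`.
  refine (intervalIntegral.hasDerivAt_integral_of_dominated_loc_of_deriv_le
    (F := fun x θ => Real.log (1 - x * Real.sin θ))
    (F' := fun x θ => -Real.sin θ / (1 - x * Real.sin θ))
    (s := Set.Ioo 0 ((1 + h) / 2)) (bound := fun _ => 1 / ((1 - h) / 2))
    (Ioo_mem_nhds h0 (by linarith)) ?_ (hlog.intervalIntegrable _ _) ?_ ?_
    intervalIntegrable_const ?_).2
  · exact Filter.Eventually.of_forall fun x => by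
      exact Measurable.aestronglyMeasurable (by fun_prop)
  · exact Measurable.aestronglyMeasurable (by fun_prop)
  · refine Filter.Eventually.of_forall fun θ _ x hx => ?_
    have hge : (1 - h) / 2 ≤ 1 - x * Real.sin θ := by
      linarith [one_sub_mul_sin_ge hx.1.le θ, hx.2]
    rw [Real.norm_eq_abs, abs_div, abs_neg, abs_of_pos (a := 1 - x * Real.sin θ) (by linarith)]
    exact div_le_div₀ zero_le_one (Real.abs_sin_le_one θ) (by linarith) hge
  · refine Filter.Eventually.of_forall fun θ _ x hx => ?_
    have hE : 1 - x * Real.sin θ ≠ 0 := by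
      linarith [one_sub_mul_sin_ge hx.1.le θ, hx.2]
    have hlin : HasDerivAt (fun x => 1 - x * Real.sin θ) (-Real.sin θ) x := by
      simpa using ((hasDerivAt_id x).mul_const (Real.sin θ)).const_sub 1
    exact hlin.log hE
end

section
/- Let φ and ψ be real polynomials, not both identically zero. Then the polynomial φ(X)² − (1 − X²)·ψ(X)² is not identically zero, every h ∈ (0,1) satisfying φ(h) + ψ(h)·√(1 − h²) = 0 is a root of this polynomial, and consequently the set {h ∈ (0,1) : φ(h) + ψ(h)·√(1 − h²) = 0} is finite with at most 2·max(deg φ, deg ψ) + 2 elements. -/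
/-!
For `x > 1` the polynomial `φ² − (1 − X²)ψ²` evaluates to `φ(x)² + (x² − 1)ψ(x)²`, a sum of
nonnegative terms, so if it were zero, then `φ` and `ψ` would both vanish on the infinite set
`(1, ∞)`. For `h ∈ (0,1)` it factors as
`(φ(h) + ψ(h)√(1 − h²)) (φ(h) − ψ(h)√(1 − h²))`, so the zeros to be counted lie among
its roots, whose number is at most its degree.
-/

open Real Polynomial

/-- Zero-counting principle: if `φ, ψ` are real polynomials, not both zero, then
`φ(X)² − (1 − X²) ψ(X)²` is a nonzero polynomial, every `h ∈ (0,1)` with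
`φ(h) + ψ(h)√(1 − h²) = 0` is a root of it, and consequently the zero set
`{h ∈ (0,1) : φ(h) + ψ(h)√(1 − h²) = 0}` is finite with at most
`2·max(deg φ, deg ψ) + 2` elements. -/
theorem sqrt_poly_zero_count (φ ψ : Polynomial ℝ) (hφψ : ¬(φ = 0 ∧ ψ = 0)) :
    φ ^ 2 - (1 - X ^ 2) * ψ ^ 2 ≠ 0 ∧
      (∀ h ∈ Set.Ioo (0 : ℝ) 1,
        φ.eval h + ψ.eval h * Real.sqrt (1 - h ^ 2) = 0 →
          (φ ^ 2 - (1 - X ^ 2) * ψ ^ 2).eval h = 0) ∧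
      {h ∈ Set.Ioo (0 : ℝ) 1 | φ.eval h + ψ.eval h * Real.sqrt (1 - h ^ 2) = 0}.Finite ∧
      {h ∈ Set.Ioo (0 : ℝ) 1 | φ.eval h + ψ.eval h * Real.sqrt (1 - h ^ 2) = 0}.ncard ≤
        2 * max φ.natDegree ψ.natDegree + 2 := by
  have hne : φ ^ 2 - (1 - X ^ 2) * ψ ^ 2 ≠ 0 := by
    intro h0
    have key : ∀ x ∈ Set.Ioi (1 : ℝ), φ.eval x = 0 ∧ ψ.eval x = 0 := by
      intro x hx
      have hx1 : (1 : ℝ) < x := hx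
      have hx2 : 0 < x ^ 2 - 1 := by nlinarith
      have he : φ.eval x ^ 2 + (x ^ 2 - 1) * ψ.eval x ^ 2 = 0 := by
        have h1 := congrArg (Polynomial.eval x) h0
        simp only [eval_sub, eval_mul, eval_pow, eval_one, eval_X, eval_zero] at h1
        linarith
      have hq : 0 ≤ (x ^ 2 - 1) * ψ.eval x ^ 2 := by positivity
      have hφ : φ.eval x ^ 2 = 0 := by nlinarith [sq_nonneg (φ.eval x)]
      have hψ : (x ^ 2 - 1) * ψ.eval x ^ 2 = 0 := by linarith
      refine ⟨pow_eq_zero_iff two_ne_zero |>.1 hφ, ?_⟩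
      exact pow_eq_zero_iff two_ne_zero |>.1 ((mul_eq_zero.1 hψ).resolve_left hx2.ne')
    exact hφψ
      ⟨φ.eq_zero_of_infinite_isRoot ((Set.Ioi_infinite 1).mono fun x hx => (key x hx).1),
        ψ.eq_zero_of_infinite_isRoot ((Set.Ioi_infinite 1).mono fun x hx => (key x hx).2)⟩
  have hroot : ∀ h ∈ Set.Ioo (0 : ℝ) 1,
      φ.eval h + ψ.eval h * Real.sqrt (1 - h ^ 2) = 0 →
        (φ ^ 2 - (1 - X ^ 2) * ψ ^ 2).eval h = 0 := by
    rintro h ⟨h0, h1⟩ hz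
    have hs : Real.sqrt (1 - h ^ 2) ^ 2 = 1 - h ^ 2 := Real.sq_sqrt (by nlinarith)
    simp only [eval_sub, eval_mul, eval_pow, eval_one, eval_X]
    linear_combination (φ.eval h - ψ.eval h * Real.sqrt (1 - h ^ 2)) * hz
      + ψ.eval h ^ 2 * hs
  have hsub : {h ∈ Set.Ioo (0 : ℝ) 1 | φ.eval h + ψ.eval h * Real.sqrt (1 - h ^ 2) = 0} ⊆
      ((φ ^ 2 - (1 - X ^ 2) * ψ ^ 2).roots.toFinset : Set ℝ) := by
    rintro h ⟨hI, hz⟩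
    simpa only [Finset.mem_coe, Multiset.mem_toFinset, mem_roots hne, IsRoot.def] using
      hroot h hI hz
  have hdeg : (φ ^ 2 - (1 - X ^ 2) * ψ ^ 2).natDegree ≤
      2 * max φ.natDegree ψ.natDegree + 2 := by
    have h1 : (φ ^ 2).natDegree ≤ 2 * φ.natDegree := natDegree_pow_le
    have h2 : (ψ ^ 2).natDegree ≤ 2 * ψ.natDegree := natDegree_pow_le
    have h3 : ((1 : ℝ[X]) - X ^ 2).natDegree ≤ 2 := by compute_degree
    have h4 : ((1 - X ^ 2) * ψ ^ 2).natDegree ≤ 2 + 2 * ψ.natDegree :=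
      natDegree_mul_le_of_le h3 h2
    refine (natDegree_sub_le _ _).trans ?_
    omega
  refine ⟨hne, hroot, (Finset.finite_toSet _).subset hsub, ?_⟩
  refine (Set.ncard_le_ncard hsub (Finset.finite_toSet _)).trans ?_
  rw [Set.ncard_coe_finset]
  exact (Multiset.toFinset_card_le _).trans ((card_roots' _).trans hdeg)
end
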